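/- arXiv:2605.10233 — 4 statements merged into one kernel-verified Lean document; each statement's English description precedes it below -/
import Mathlib

section
/- If n > 2m, then w(n, m) < 1; that is, under mutual random play the Faithful's winning probability is strictly positive whenever the Traitors have not yet reached parity. -/
/-- The Migdał win-probability function: the Traitor win probability under
mutual random play in the Traitors game with `n` players, `m` of whom are Traitors. -/
def migdalW (n m : ℕ) : ℚ :=
  if m = 0 then 0
  else if _h : n ≤ 2 * m then 1
  else ((n : ℚ) - (m : ℚ)) / (n : ℚ) * migdalW (n - 2) m
      + (m : ℚ) / (n : ℚ) * migdalW (n - 2) (m - 1)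
termination_by n
decreasing_by all_goals omega

theorem migdalW_aux (n : ℕ) : ∀ m : ℕ, migdalW n m ≤ 1 ∧ (2 * m < n → migdalW n m < 1) := by
  induction n using Nat.strong_induction_on with
  | _ n ih =>
    intro m
    by_cases hm : m = 0
    · rw [migdalW]; simp [hm]
    by_cases hn : n ≤ 2 * m
    · rw [migdalW]
      simp only [hm, hn, if_false, dite_true]
      exact ⟨le_refl _, fun h => by omega⟩
    have key : migdalW n m < 1 := by
      rw [migdalW]
      simp only [hm, hn, if_false, dite_false]
      have h1 := (ih (n - 2) (by omega) m).1
      have h2 := (ih (n - 2) (by omega) (m - 1)).2 (by omega)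
      have hn0 : (0 : ℚ) < n := by exact_mod_cast (by omega : 0 < n)
      have hm0 : (0 : ℚ) < m := by exact_mod_cast (by omega : 0 < m)
      have hmn : (m : ℚ) ≤ n := by exact_mod_cast (by omega : m ≤ n)
      have a : (0 : ℚ) ≤ ((n : ℚ) - m) / n := div_nonneg (by linarith) hn0.le
      have b : (0 : ℚ) < (m : ℚ) / n := div_pos hm0 hn0
      have c : ((n : ℚ) - m) / n + (m : ℚ) / n = 1 := by field_simp; ring
      have d := mul_le_mul_of_nonneg_left h1 a
      have e := mul_lt_mul_of_pos_left h2 b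
      linarith
    exact ⟨key.le, fun _ => key⟩

theorem migdalW_lt_one (n m : ℕ) (h : 2 * m < n) : migdalW n m < 1 :=
  (migdalW_aux n m).2 h
end

section
/- Let n ≥ 3 and let v : ZMod n → ZMod n be a vote profile in which exactly one player i₀ deviates from Vote-Left: v(i) = i + 1 for all i ≠ i₀, while v(i₀) ≠ i₀ + 1 and v(i₀) ≠ i₀. Then the deviation is identifiable from the public vote counts: player i₀ + 1 receives 0 votes and the deviator's target v(i₀) receives exactly 2 votes, so the vote-count function is not constantly 1. -/
/-- If exactly one player `i₀` deviates from Vote-Left (voting for neither `i₀ + 1`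
nor themself), the deviation is identifiable from the public vote counts:
player `i₀ + 1` receives no votes, the deviator's target receives exactly two votes,
and the vote-count function is not constantly `1`. -/
theorem voteLeft_deviation_detectable (n : ℕ) [NeZero n] (hn : 3 ≤ n)
    (v : ZMod n → ZMod n) (i₀ : ZMod n)
    (hcomply : ∀ i : ZMod n, i ≠ i₀ → v i = i + 1)
    (hdev : v i₀ ≠ i₀ + 1) (hself : v i₀ ≠ i₀) :
    (Finset.univ.filter fun i : ZMod n => v i = i₀ + 1).card = 0 ∧
    (Finset.univ.filter fun i : ZMod n => v i = v i₀).card = 2 ∧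
    ¬ ∀ j : ZMod n, (Finset.univ.filter fun i : ZMod n => v i = j).card = 1 := by
  have h0 : (Finset.univ.filter fun i : ZMod n => v i = i₀ + 1).card = 0 := by
    rw [Finset.card_eq_zero, Finset.filter_eq_empty_iff]
    intro i _ h
    by_cases hi : i = i₀
    · subst hi
      exact hdev h
    · rw [hcomply i hi] at h
      exact hi (add_right_cancel h)
  refine ⟨h0, ?_, ?_⟩
  · have hne : v i₀ - 1 ≠ i₀ := fun h => hdev (sub_eq_iff_eq_add.mp h)
    have hs : (Finset.univ.filter fun i : ZMod n => v i = v i₀) = {i₀, v i₀ - 1} := by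
      ext i
      simp only [Finset.mem_filter, Finset.mem_univ, true_and, Finset.mem_insert,
        Finset.mem_singleton]
      by_cases hi : i = i₀
      · simp [hi]
      · rw [hcomply i hi]
        simp [hi, eq_sub_iff_add_eq]
    rw [hs, Finset.card_pair hne.symm]
  · intro h
    have := h (i₀ + 1)
    omega
end

section
/- For all natural numbers n and m, w(n, m) ≤ w†(n, m); that is, the Traitors' win probability under Vote-Left with optimal late-game deviation is at least their win probability under mutual random play, the two recurrences differing only in that states with 2m < n ≤ 2m + 2 are absorbed into the Traitor-win region by σ†. -/
/-- The Vote-Left optimal-deviation win-probability function: the Traitor win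
probability under Vote-Left when the Traitors comply while `n > 2m + 2` and
collude in the late-game phase `n ≤ 2m + 2`. -/
def wDagger (n m : ℕ) : ℚ :=
  if m = 0 then 0
  else if _h : n ≤ 2 * m + 2 then 1
  else ((n : ℚ) - (m : ℚ)) / (n : ℚ) * wDagger (n - 2) m
      + (m : ℚ) / (n : ℚ) * wDagger (n - 2) (m - 1)
termination_by n
decreasing_by all_goals omega

theorem migdal_coeff {n m : ℕ} (h : ¬ n ≤ 2 * m) :
    0 ≤ ((n : ℚ) - m) / n ∧ 0 ≤ (m : ℚ) / n ∧ ((n : ℚ) - m) / n + (m : ℚ) / n = 1 := by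
  have h1 : (m : ℚ) ≤ n := by exact_mod_cast (by omega : m ≤ n)
  have h2 : (0 : ℚ) < n := by exact_mod_cast (by omega : 0 < n)
  refine ⟨div_nonneg (by linarith) h2.le, by positivity, ?_⟩
  field_simp
  ring

theorem migdalW_le_one (n m : ℕ) : migdalW n m ≤ 1 := by
  induction n using Nat.strong_induction_on generalizing m with
  | _ n ih =>
    rw [migdalW]
    split_ifs with h0 h1
    · norm_num
    · exact le_rfl
    · obtain ⟨a, b, c⟩ := migdal_coeff h1
      have e1 := mul_le_mul_of_nonneg_left (ih (n - 2) (by omega) m) a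
      have e2 := mul_le_mul_of_nonneg_left (ih (n - 2) (by omega) (m - 1)) b
      linarith

theorem migdalW_le_wDagger (n m : ℕ) : migdalW n m ≤ wDagger n m := by
  induction n using Nat.strong_induction_on generalizing m with
  | _ n ih =>
    by_cases h0 : m = 0
    · rw [migdalW, wDagger, if_pos h0, if_pos h0]
    by_cases h2 : n ≤ 2 * m + 2
    · rw [wDagger, if_neg h0, dif_pos h2]
      exact migdalW_le_one n m
    have h1 : ¬ n ≤ 2 * m := by omega
    rw [migdalW, wDagger, if_neg h0, if_neg h0, dif_neg h1, dif_neg h2]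
    obtain ⟨a, b, _⟩ := migdal_coeff h1
    exact add_le_add (mul_le_mul_of_nonneg_left (ih (n - 2) (by omega) m) a)
      (mul_le_mul_of_nonneg_left (ih (n - 2) (by omega) (m - 1)) b)
end

section
/- If n > 2m + 2, then w†(n, m) < 1; that is, under Vote-Left with optimal Traitor deviation the Faithful retain a strictly positive winning probability from every state in the equilibrium region. -/
theorem wDagger_le_one_aux (n : ℕ) : ∀ m : ℕ, wDagger n m ≤ 1 := by
  induction n using Nat.strong_induction_on with
  | _ n ih =>
    intro m
    rw [wDagger]
    split_ifs with h0 h1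
    · norm_num
    · exact le_refl _
    · have hn : (0 : ℚ) < n := by exact_mod_cast (by omega : 0 < n)
      have hmn : (m : ℚ) ≤ n := by exact_mod_cast (by omega : m ≤ n)
      have a := ih (n - 2) (by omega) m
      have b := ih (n - 2) (by omega) (m - 1)
      have p : (0 : ℚ) ≤ ((n : ℚ) - m) / n := div_nonneg (by linarith) hn.le
      have q : (0 : ℚ) ≤ (m : ℚ) / n := by positivity
      have e : ((n : ℚ) - m) / n + (m : ℚ) / n = 1 := by field_simp; ring
      nlinarith [mul_le_mul_of_nonneg_left a p, mul_le_mul_of_nonneg_left b q]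

theorem wDagger_lt_one (n m : ℕ) (h : 2 * m + 2 < n) : wDagger n m < 1 := by
  induction m generalizing n with
  | zero => rw [wDagger]; simp
  | succ k ih =>
    rw [wDagger, if_neg (by omega), dif_neg (by omega)]
    have hn : (0 : ℚ) < n := by exact_mod_cast (by omega : 0 < n)
    have hmn : ((k + 1 : ℕ) : ℚ) ≤ n := by exact_mod_cast (by omega : k + 1 ≤ n)
    have hm : (0 : ℚ) < ((k + 1 : ℕ) : ℚ) := by exact_mod_cast Nat.succ_pos k
    have a := wDagger_le_one_aux (n - 2) (k + 1)
    have b : wDagger (n - 2) (k + 1 - 1) < 1 := ih (n - 2) (by omega)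
    generalize ((k + 1 : ℕ) : ℚ) = M at *
    have p : (0 : ℚ) ≤ ((n : ℚ) - M) / n := div_nonneg (by linarith) hn.le
    have q : (0 : ℚ) < M / n := div_pos hm hn
    have e : ((n : ℚ) - M) / n + M / n = 1 := by field_simp; ring
    linarith [mul_le_mul_of_nonneg_left a p, mul_lt_mul_of_pos_left b q]
end
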